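/- In F_p with p = 3697, n = 24, k = 154, and primitive root g = 5, let X_i = {g^{24a+i} : 0 ≤ a < 154}. Then for all i, j, l modulo 24: (X_i + X_j) ∩ X_l = ∅ holds if and only if (up to permutation of the cycle) j ≡ i and l ≡ i + 12 (mod 24). -/

import Mathlib

open Pointwise

/-!
Dividing `x + y = z` by `x` reduces the emptiness of `(X i + X j) ∩ X l` to whether
`1 + w ∈ X (l - i)` has a solution `w ∈ X (j - i)`, so only the `24 ^ 2` pairs of index differences
matter. As in Euler's criterion, membership of `z` in `X m` amounts to the single equation
`z ^ 154 = 5 ^ (154 * m)`, which turns the remaining question into modular arithmetic small enough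
for the kernel.
-/

/-- The cyclotomic class of index `i` modulo `n` with respect to `g`: the powers of `g` whose
exponent reduces to `i`. The exponents are all integers, so that the classes can be indexed by
`ZMod n` without choosing representatives; if `g` is a primitive root of a finite field and `n`
divides the order of `g`, these are the cosets of the `n`-th powers. -/
def cyclotomicClass {G : Type*} [DivInvMonoid G] {n : ℕ} (g : G) (i : ZMod n) : Set G :=
  {x | ∃ a : ℤ, (a : ZMod n) = i ∧ g ^ a = x}

section DivisionRing

variable {K : Type*} [DivisionRing K] {n : ℕ} {g : K}

theorem cyclotomicClass_add_inter_nonempty_iff (hg : g ≠ 0) (i j l : ZMod n) :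
    ((cyclotomicClass g i + cyclotomicClass g j) ∩ cyclotomicClass g l).Nonempty ↔
      ∃ w ∈ cyclotomicClass g (j - i), 1 + w ∈ cyclotomicClass g (l - i) := by
  constructor
  · rintro ⟨_, ⟨_, ⟨a, rfl, rfl⟩, _, ⟨b, rfl, rfl⟩, rfl⟩, c, rfl, hc⟩
    refine ⟨g ^ (b - a), ⟨b - a, Int.cast_sub b a, rfl⟩, c - a, Int.cast_sub c a, ?_⟩
    rw [zpow_sub₀ hg, zpow_sub₀ hg, hc, add_div, div_self (zpow_ne_zero a hg)]
  · rintro ⟨_, ⟨b, hb, rfl⟩, c, hc, hsum⟩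
    obtain ⟨a, rfl⟩ := ZMod.intCast_surjective i
    refine ⟨g ^ a + g ^ (b + a), Set.add_mem_add ⟨a, rfl, rfl⟩ ⟨b + a, ?_, rfl⟩, c + a, ?_, ?_⟩
    · rw [Int.cast_add, hb, sub_add_cancel]
    · rw [Int.cast_add, hc, sub_add_cancel]
    · rw [zpow_add₀ hg, zpow_add₀ hg, hsum, one_add_mul]

end DivisionRing

section PrimitiveRoot

variable {n k : ℕ} [NeZero n] [NeZero k]

theorem cyclotomicClass_natCast {G : Type*} [CommGroupWithZero G] {g : G}
    (hg : IsPrimitiveRoot g (n * k)) (m : ℕ) :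
    cyclotomicClass g (m : ZMod n) = {x | ∃ a < k, x = g ^ (n * a + m)} := by
  have hk : (k : ℤ) ≠ 0 := mod_cast NeZero.ne k
  have hg0 : g ≠ 0 := hg.ne_zero (NeZero.ne _)
  ext x
  constructor
  · rintro ⟨b, hb, rfl⟩
    obtain ⟨c, hc⟩ : (n : ℤ) ∣ b - m := by
      rw [← ZMod.intCast_zmod_eq_zero_iff_dvd]
      simp [hb]
    lift c % k to ℕ using Int.emod_nonneg c hk with a ha
    have hb_eq : b = (n * k : ℕ) * (c / k) + (n * a + m : ℕ) := by
      have := Int.mul_ediv_add_emod c k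
      rw [← ha] at this
      push_cast
      linear_combination hc - n * this
    have ha_lt : (a : ℤ) < k := ha ▸ Int.emod_lt_of_pos c (by positivity)
    refine ⟨a, mod_cast ha_lt, ?_⟩
    rw [hb_eq, zpow_add₀ hg0, zpow_mul, zpow_natCast, hg.pow_eq_one, one_zpow, one_mul,
      zpow_natCast]
  · rintro ⟨a, -, rfl⟩
    exact ⟨(n * a + m : ℕ), by simp, zpow_natCast g _⟩

variable {K : Type*} [Field K] {g : K}

theorem mem_cyclotomicClass_natCast_iff_pow_eq (hg : IsPrimitiveRoot g (n * k)) {x : K} {m : ℕ} :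
    x ∈ cyclotomicClass g (m : ZMod n) ↔ x ^ k = g ^ (k * m) := by
  constructor
  · rw [cyclotomicClass_natCast hg]
    rintro ⟨a, -, rfl⟩
    rw [← pow_mul, show (n * a + m) * k = n * k * a + k * m by ring, pow_add, pow_mul,
      hg.pow_eq_one, one_pow, one_mul]
  · intro hx
    have hx_root : x ^ (n * k) = 1 := by
      rw [mul_comm, pow_mul, hx, ← pow_mul, show k * m * n = n * k * m by ring, pow_mul,
        hg.pow_eq_one, one_pow]
    obtain ⟨b, -, rfl⟩ := hg.eq_pow_of_pow_eq_one hx_root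
    have hbm : k * b ≡ k * m [MOD k * n] := by
      rwa [← pow_mul, mul_comm b, (hg.isOfFinOrder (NeZero.ne _)).pow_eq_pow_iff_modEq,
        ← hg.eq_orderOf, mul_comm n] at hx
    refine ⟨b, ?_, zpow_natCast g b⟩
    exact_mod_cast (ZMod.natCast_eq_natCast_iff b m n).2 (hbm.mul_left_cancel' (NeZero.ne k))

theorem cyclotomicClass_add_inter_eq_empty_iff_forall_pow_ne (hg : IsPrimitiveRoot g (n * k))
    (i j l : ZMod n) :
    (cyclotomicClass g i + cyclotomicClass g j) ∩ cyclotomicClass g l = ∅ ↔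
      ∀ a < k, (1 + g ^ (n * a + (j - i).val)) ^ k ≠ g ^ (k * (l - i).val) := by
  have hd := cyclotomicClass_natCast hg (j - i).val
  have he (z : K) := mem_cyclotomicClass_natCast_iff_pow_eq hg (x := z) (m := (l - i).val)
  simp only [ZMod.natCast_zmod_val] at hd he
  rw [← Set.not_nonempty_iff_eq_empty,
    cyclotomicClass_add_inter_nonempty_iff (hg.ne_zero (NeZero.ne _))]
  simp [hd, he]

end PrimitiveRoot

theorem exists_triple_eq_iff_sub {A : Type*} [AddCommGroup A] (c t i j l : A) :
    (∃ m, ({i, j, l} : Multiset A) = {m, m, m + c}) ↔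
      ∃ m, ({i - t, j - t, l - t} : Multiset A) = {m, m, m + c} := by
  refine (Equiv.subRight t).exists_congr fun m => ?_
  rw [← (Multiset.map_injective (sub_left_injective (b := t))).eq_iff]
  simp [sub_add_eq_add_sub]

section ZMod3697

theorem fact_prime_3697 : Fact (Nat.Prime 3697) := ⟨by norm_num⟩

attribute [local instance] fact_prime_3697

theorem isPrimitiveRoot_five : IsPrimitiveRoot (5 : ZMod 3697) (24 * 154) := by
  rw [IsPrimitiveRoot.iff_orderOf]
  have h5 : (5 : ZMod 3697) ≠ 0 := by decide
  refine orderOf_eq_of_pow_and_pow_div_prime (by norm_num) (ZMod.pow_card_sub_one_eq_one h5) ?_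
  intro q hq hdvd
  have hq_mem : q ∈ Nat.primeFactorsList 3696 :=
    (Nat.mem_primeFactorsList (by norm_num)).2 ⟨hq, hdvd⟩
  have hq_cases : q = 2 ∨ q = 3 ∨ q = 7 ∨ q = 11 := by simpa using hq_mem
  rcases hq_cases with rfl | rfl | rfl | rfl <;> reduce_mod_char <;> decide

-- The inner reduction modulo 3697 keeps the numbers raised to the power 154 small.
theorem forall_one_add_pow_mod_ne_iff : ∀ d e : ZMod 24,
    (∀ a < 154, (1 + 5 ^ (24 * a + d.val) % 3697) ^ 154 % 3697 ≠ 5 ^ (154 * e.val) % 3697) ↔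
      ∃ m : ZMod 24, ({0, d, e} : Multiset (ZMod 24)) = {m, m, m + 12} := by
  decide +kernel

theorem cyclotomicClass_five_add_inter_eq_empty_iff (i j l : ZMod 24) :
    (cyclotomicClass (5 : ZMod 3697) i + cyclotomicClass 5 j) ∩ cyclotomicClass 5 l = ∅ ↔
      ∃ m : ZMod 24, ({i, j, l} : Multiset (ZMod 24)) = {m, m, m + 12} := by
  rw [cyclotomicClass_add_inter_eq_empty_iff_forall_pow_ne isPrimitiveRoot_five,
    exists_triple_eq_iff_sub 12 i, sub_self, ← forall_one_add_pow_mod_ne_iff]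
  refine forall₂_congr fun a _ => not_congr ?_
  rw [← ZMod.natCast_eq_natCast_iff']
  push_cast [ZMod.natCast_mod]
  rfl

end ZMod3697

theorem stmt_14
    (X : ℕ → Set (ZMod 3697))
    (hX : ∀ m, X m = {x : ZMod 3697 | ∃ a < 154, x = (5 : ZMod 3697) ^ (24 * a + m)}) :
    ∀ i < 24, ∀ j < 24, ∀ l < 24,
      ((X i + X j) ∩ X l = ∅ ↔
        ∃ m : ZMod 24,
          ({(i : ZMod 24), (j : ZMod 24), (l : ZMod 24)} : Multiset (ZMod 24)) =
            {m, m, m + 12}) := by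
  have := fact_prime_3697
  intro i _ j _ l _
  simp only [hX, ← cyclotomicClass_natCast isPrimitiveRoot_five]
  exact cyclotomicClass_five_add_inter_eq_empty_iff i j l
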